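/- For all Silver trees T₁ and T₂, either [T₁] ∩ [T₂] is finite, or there exists a Silver tree T with T ⊆ T₁ ∩ T₂ (so in particular [T] ⊆ [T₁] ∩ [T₂]). Consequently, if T₁ and T₂ have no common Silver subtree, then [T₁] ∩ [T₂] is finite. -/

import Mathlib

/-- `T` is a tree of finite binary sequences: closed under initial segments. -/
def IsTree (T : Set (List Bool)) : Prop :=
  ∀ t ∈ T, ∀ k : ℕ, t.take k ∈ T

/-- `t` is a splitting node of `T`: it lies in `T` and both its one-bit extensions do. -/
def SplitNode (T : Set (List Bool)) (t : List Bool) : Prop :=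
  t ∈ T ∧ t ++ [false] ∈ T ∧ t ++ [true] ∈ T

/-- `T` is a perfect tree: a nonempty tree in which every node extends to a splitting node. -/
def IsPerfect (T : Set (List Bool)) : Prop :=
  IsTree T ∧ T.Nonempty ∧ ∀ t ∈ T, ∃ s, t <+: s ∧ SplitNode T s

/-- `T` is a Silver (uniform perfect) tree: perfect, and nodes of equal length
have the same one-bit extensions in `T`. -/
def IsSilver (T : Set (List Bool)) : Prop :=
  IsPerfect T ∧ ∀ s ∈ T, ∀ t ∈ T, s.length = t.length →
    ∀ i : Bool, (s ++ [i] ∈ T ↔ t ++ [i] ∈ T)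

/-- The body `[T]` of a tree: all infinite branches whose finite initial
segments all lie in `T`. -/
def body (T : Set (List Bool)) : Set (ℕ → Bool) :=
  { x | ∀ n : ℕ, (List.ofFn fun i : Fin n => x i) ∈ T }

/-!
Uniformity and being closed under initial segments pass to intersections, so it suffices to show
that a uniform tree with an infinite body is Silver. Infinitely many branches force splitting nodes
on arbitrarily high levels. In a uniform tree, the part of such a node above level `|t|` may be
transplanted onto any node `t`, and the result splits again because splitting only depends on the
level.
-/

theorem exists_ne_forall_mem_finset_eq_of_infinite {ι : Type*} {α : ι → Type*} [∀ i, Finite (α i)]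
    {S : Set (∀ i, α i)} (hS : S.Infinite) (F : Finset ι) :
    ∃ x ∈ S, ∃ y ∈ S, x ≠ y ∧ ∀ i ∈ F, x i = y i := by
  obtain ⟨x, hx, y, hy, hne, heq⟩ :=
    hS.exists_ne_map_eq_of_mapsTo (Set.mapsTo_univ F.restrict S) Set.finite_univ
  exact ⟨x, hx, y, hy, hne, fun i hi => congrFun heq ⟨i, hi⟩⟩

theorem length_append_drop_length {α : Type*} {s t : List α} (h : t.length ≤ s.length) :
    (t ++ s.drop t.length).length = s.length := by
  rw [List.length_append, List.length_drop, Nat.add_sub_cancel' h]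

theorem body_inter (T₁ T₂ : Set (List Bool)) : body (T₁ ∩ T₂) = body T₁ ∩ body T₂ :=
  Set.ext fun _ => forall_and

theorem ofFn_append_mem_of_mem_body {T : Set (List Bool)} {x : ℕ → Bool} (hx : x ∈ body T)
    (n : ℕ) : (List.ofFn fun i : Fin n => x i) ++ [x n] ∈ T := by
  simpa only [List.ofFn_succ_last, Fin.val_castSucc, Fin.val_last] using hx (n + 1)

theorem SplitNode.of_ne {T : Set (List Bool)} {t : List Bool} {a b : Bool} (ht : t ∈ T)
    (hab : a ≠ b) (ha : t ++ [a] ∈ T) (hb : t ++ [b] ∈ T) : SplitNode T t := by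
  cases a <;> cases b
  · contradiction
  · exact ⟨ht, ha, hb⟩
  · exact ⟨ht, hb, ha⟩
  · contradiction

theorem exists_splitNode_of_infinite_body {T : Set (List Bool)} (hT : (body T).Infinite) (N : ℕ) :
    ∃ s, SplitNode T s ∧ N ≤ s.length := by
  obtain ⟨x, hx, y, hy, hne, hxy⟩ :=
    exists_ne_forall_mem_finset_eq_of_infinite hT (Finset.range N)
  set n := PiNat.firstDiff x y
  have hsplit : x n ≠ y n := PiNat.apply_firstDiff_ne hne
  have hN : N ≤ n := not_lt.1 fun hn => hsplit (hxy n (Finset.mem_range.2 hn))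
  have hprefix : (List.ofFn fun i : Fin n => y i) = List.ofFn fun i : Fin n => x i :=
    congrArg List.ofFn (funext fun i => (PiNat.apply_eq_of_lt_firstDiff i.2).symm)
  refine ⟨List.ofFn fun i : Fin n => x i, ?_, hN.trans_eq List.length_ofFn.symm⟩
  exact .of_ne (hx n) hsplit (ofFn_append_mem_of_mem_body hx n)
    (hprefix ▸ ofFn_append_mem_of_mem_body hy n)

theorem IsTree.inter {T₁ T₂ : Set (List Bool)} (h₁ : IsTree T₁) (h₂ : IsTree T₂) :
    IsTree (T₁ ∩ T₂) :=
  fun t ht k => ⟨h₁ t ht.1 k, h₂ t ht.2 k⟩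

theorem IsTree.mem_of_append_mem {T : Set (List Bool)} (hT : IsTree T) {s t : List Bool}
    (h : s ++ t ∈ T) : s ∈ T := by
  simpa only [List.take_left] using hT _ h s.length

/-- Nodes of `T` of equal length have the same one-bit extensions in `T`. This is the uniformity
clause of `IsSilver`, kept apart from perfectness because it is inherited by intersections. -/
def IsUniform (T : Set (List Bool)) : Prop :=
  ∀ s ∈ T, ∀ t ∈ T, s.length = t.length → ∀ i : Bool, (s ++ [i] ∈ T ↔ t ++ [i] ∈ T)

namespace IsUniform

variable {T T₁ T₂ : Set (List Bool)} {s t : List Bool}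

theorem inter (h₁ : IsUniform T₁) (h₂ : IsUniform T₂) : IsUniform (T₁ ∩ T₂) :=
  fun s hs t ht hst i =>
    and_congr (h₁ s hs.1 t ht.1 hst i) (h₂ s hs.2 t ht.2 hst i)

theorem splitNode_of_length_eq (hT : IsUniform T) (hs : SplitNode T s) (ht : t ∈ T)
    (hst : s.length = t.length) : SplitNode T t :=
  ⟨ht, (hT s hs.1 t ht hst false).1 hs.2.1, (hT s hs.1 t ht hst true).1 hs.2.2⟩

theorem append_drop_mem (hT : IsUniform T) (htree : IsTree T) (ht : t ∈ T) (hs : s ∈ T) :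
    t ++ s.drop t.length ∈ T := by
  induction s using List.reverseRecOn with
  | nil => simpa only [List.drop_nil, List.append_nil] using ht
  | append_singleton s b ih =>
    have hs' : s ∈ T := htree.mem_of_append_mem hs
    rcases le_or_gt t.length s.length with hle | hlt
    · rw [List.drop_append_of_le_length hle, ← List.append_assoc]
      exact (hT s hs' _ (ih hs') (length_append_drop_length hle).symm b).1 hs
    · have hdrop : (s ++ [b]).drop t.length = [] :=
        List.drop_eq_nil_of_le (List.length_append.trans_le hlt)
      simpa only [hdrop, List.append_nil] using ht

theorem isSilver_of_infinite_body (hT : IsUniform T) (htree : IsTree T)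
    (hbody : (body T).Infinite) : IsSilver T := by
  obtain ⟨x, hx⟩ := hbody.nonempty
  refine ⟨⟨htree, ⟨_, hx 0⟩, fun t ht => ?_⟩, hT⟩
  obtain ⟨s, hs, hle⟩ := exists_splitNode_of_infinite_body hbody t.length
  exact ⟨t ++ s.drop t.length, List.prefix_append _ _,
    hT.splitNode_of_length_eq hs (hT.append_drop_mem htree ht hs.1)
      (length_append_drop_length hle).symm⟩

end IsUniform

theorem silver_intersection_dichotomy_general {T₁ T₂ : Set (List Bool)}
    (htree₁ : IsTree T₁) (h₁ : IsUniform T₁) (htree₂ : IsTree T₂) (h₂ : IsUniform T₂) :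
    (body T₁ ∩ body T₂).Finite ∨ IsSilver (T₁ ∩ T₂) := by
  rw [← body_inter]
  exact (Set.finite_or_infinite _).imp_right
    ((h₁.inter h₂).isSilver_of_infinite_body (htree₁.inter htree₂))

/-- For Silver trees `T₁, T₂`: either `[T₁] ∩ [T₂]` is finite, or `T₁ ∩ T₂`
contains a Silver tree. Consequently, if `T₁` and `T₂` have no common Silver
subtree, then `[T₁] ∩ [T₂]` is finite. -/
theorem silver_intersection_dichotomy (T₁ T₂ : Set (List Bool))
    (h₁ : IsSilver T₁) (h₂ : IsSilver T₂) :
    ((body T₁ ∩ body T₂).Finite ∨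
      ∃ T : Set (List Bool), IsSilver T ∧ T ⊆ T₁ ∩ T₂) ∧
    ((¬ ∃ T : Set (List Bool), IsSilver T ∧ T ⊆ T₁ ∩ T₂) →
      (body T₁ ∩ body T₂).Finite) := by
  have dichotomy := (silver_intersection_dichotomy_general h₁.1.1 h₁.2 h₂.1.1 h₂.2).imp_right
    fun h => (⟨_, h, subset_rfl⟩ : ∃ T, IsSilver T ∧ T ⊆ T₁ ∩ T₂)
  exact ⟨dichotomy, dichotomy.resolve_right⟩
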